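/- Fix 1 ≤ p < ∞ and let w be the weight given by w_n = ((n+1)/n)² for n ≥ 1. Then the weighted backward shift B_w on ℓ^p(ℕ) is frequently hypercyclic, and for every λ > 1 the operator λB_w is frequently hypercyclic, but FHC(B_w) ∩ FHC(λB_w) = ∅. In particular, there exist two frequently hypercyclic weighted shifts on ℓ^p(ℕ) with no common frequently hypercyclic vector. -/

import Mathlib

open Filter Topology
open scoped ENNReal NNReal

/-- Lower density of a set of natural numbers. -/
noncomputable def lowerDensity (E : Set ℕ) : ℝ :=
  Filter.liminf (fun n : ℕ =>
    (∑ k ∈ Finset.range (n + 1), Set.indicator E (fun _ => (1 : ℝ)) k) / ((n : ℝ) + 1))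
    Filter.atTop

/-- The set of frequently hypercyclic vectors of an operator. -/
noncomputable def FHC {X : Type*} [NormedAddCommGroup X] [NormedSpace ℂ X]
    (T : X →L[ℂ] X) : Set X :=
  {x | ∀ U : Set X, IsOpen U → U.Nonempty → 0 < lowerDensity {n : ℕ | (T ^ n) x ∈ U}}

noncomputable def cnt (E : Set ℕ) (n : ℕ) : ℝ :=
  ∑ k ∈ Finset.range (n + 1), Set.indicator E (fun _ => (1 : ℝ)) k

lemma cnt_nonneg (E : Set ℕ) (n : ℕ) : 0 ≤ cnt E n :=
  Finset.sum_nonneg fun k _ => Set.indicator_nonneg (fun _ _ => zero_le_one) k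

lemma cnt_le (E : Set ℕ) (n : ℕ) : cnt E n ≤ n + 1 := by
  have : cnt E n ≤ ∑ k ∈ Finset.range (n + 1), (1 : ℝ) :=
    Finset.sum_le_sum fun k _ => Set.indicator_le_self' (fun _ _ => zero_le_one) k
  simpa using this

lemma lowerDensity_pos_imp {E : Set ℕ} (h : 0 < lowerDensity E) :
    ∃ c : ℝ, 0 < c ∧ ∀ᶠ n : ℕ in atTop, c * ((n : ℝ) + 1) ≤ cnt E n := by
  obtain ⟨c, hc0, hc⟩ := exists_between h
  refine ⟨c, hc0, ?_⟩
  have := eventually_lt_of_lt_liminf hc (by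
    refine ⟨0, ?_⟩
    simp only [eventually_map]
    exact Eventually.of_forall fun n => div_nonneg (cnt_nonneg E n) (by positivity))
  filter_upwards [this] with n hn
  exact ((lt_div_iff₀ (by positivity)).1 hn).le

lemma lowerDensity_pos_of {E : Set ℕ} {c : ℝ} (hc : 0 < c)
    (h : ∀ᶠ n : ℕ in atTop, c * ((n : ℝ) + 1) ≤ cnt E n) : 0 < lowerDensity E := by
  refine lt_of_lt_of_le hc ?_
  unfold lowerDensity
  refine le_liminf_of_le ?_ ?_
  · refine IsBoundedUnder.isCoboundedUnder_ge ⟨1, ?_⟩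
    simp only [eventually_map]
    refine Eventually.of_forall fun n => ?_
    rw [div_le_one (by positivity)]
    exact cnt_le E n
  · filter_upwards [h] with n hn
    rw [le_div_iff₀ (by positivity)]
    exact hn

lemma lowerDensity_pos_of_seq {E : Set ℕ} (β : ℕ → ℕ) (hβ : Function.Injective β)
    (D : ℕ) (hD : 0 < D) (hb : ∀ q, β q ≤ D * (q + 1)) (hE : ∀ q, β q ∈ E) :
    0 < lowerDensity E := by
  have hDr : (0 : ℝ) < D := by exact_mod_cast hD
  refine lowerDensity_pos_of (c := 1 / (4 * D)) (by positivity) ?_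
  filter_upwards [eventually_ge_atTop (4 * D)] with n hn
  have h1 : ((n / D : ℕ) : ℝ) ≤ cnt E n := by
    have hsub : (Finset.range (n / D)).image β ⊆ Finset.range (n + 1) := by
      intro m hm
      simp only [Finset.mem_image, Finset.mem_range] at hm ⊢
      obtain ⟨q, hq, rfl⟩ := hm
      have : D * (q + 1) ≤ D * (n / D) := Nat.mul_le_mul_left _ hq
      have := Nat.mul_div_le n D
      have := hb q
      omega
    calc ((n / D : ℕ) : ℝ) = ∑ k ∈ (Finset.range (n / D)).image β,
            Set.indicator E (fun _ => (1 : ℝ)) k := by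
          rw [Finset.sum_image (fun a _ b _ h => hβ h)]
          simp [Set.indicator_of_mem (hE _)]
      _ ≤ cnt E n := Finset.sum_le_sum_of_subset_of_nonneg hsub
          fun k _ _ => Set.indicator_nonneg (fun _ _ => zero_le_one) k
  have h2 : n < D * (n / D + 1) := by
    have := Nat.lt_mul_div_succ n hD
    simpa using this
  have h2' : (n : ℝ) < D * ((n / D : ℕ) + 1) := by exact_mod_cast h2
  have hn' : (4 : ℝ) * D ≤ n := by exact_mod_cast hn
  refine le_trans ?_ h1
  rw [div_mul_eq_mul_div, one_mul, div_le_iff₀ (by positivity)]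
  have hD1 : (1 : ℝ) ≤ D := by exact_mod_cast hD
  nlinarith

/-- gap sizes -/
def vv (t : ℕ) : ℕ := padicValNat 5 (t + 1)
def NN (t : ℕ) : ℕ := 4 ^ vv t
def GG (t : ℕ) : ℕ := ∑ s ∈ Finset.range t, NN s
def bb (t : ℕ) : ℕ := 2 * GG t + NN t

lemma NN_pos (t : ℕ) : 1 ≤ NN t := Nat.one_le_pow _ _ (by norm_num)

lemma GG_succ (t : ℕ) : GG (t + 1) = GG t + NN t := Finset.sum_range_succ _ _

lemma NN_five (q : ℕ) : NN (5 * q + 4) = 4 * NN q := by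
  have : Fact (Nat.Prime 5) := ⟨by norm_num⟩
  unfold NN vv
  rw [show 5 * q + 4 + 1 = 5 * (q + 1) by ring, padicValNat.mul (by norm_num) (by omega),
    padicValNat.self (by norm_num), pow_add, pow_one]

lemma NN_other (q r : ℕ) (hr : r < 4) : NN (5 * q + r) = 1 := by
  unfold NN vv
  rw [padicValNat.eq_zero_of_not_dvd (by omega), pow_zero]

lemma GG_five (q : ℕ) : GG (5 * q) = 4 * q + 4 * GG q := by
  induction q with
  | zero => simp [GG]
  | succ q ih =>
    rw [show 5 * (q + 1) = 5 * q + 4 + 1 by ring, GG_succ, NN_five, GG_succ, GG_succ, GG_succ,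
      GG_succ, GG_succ, ih, NN_other q 3 (by norm_num), NN_other q 2 (by norm_num),
      NN_other q 1 (by norm_num)]
    have := NN_other q 0 (by norm_num)
    rw [add_zero] at this
    rw [this]
    ring

lemma GG_le (t : ℕ) : GG t ≤ 4 * t := by
  induction t using Nat.strong_induction_on with
  | _ t ih =>
    rcases Nat.eq_zero_or_pos t with rfl | ht
    · simp [GG]
    have h0 : ∀ q r, r ≤ 4 → GG (5 * q + r) = GG (5 * q) + r := by
      intro q r hr
      induction r with
      | zero => rfl
      | succ r ihr =>
        rw [← add_assoc, GG_succ, ihr (by omega), NN_other q r (by omega)]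
        ring
    have hq := ih (t / 5) (by omega)
    have h1 := h0 (t / 5) (t % 5) (by omega)
    rw [Nat.div_add_mod, GG_five] at h1
    omega

lemma bb_le (t : ℕ) : bb t ≤ 8 * (t + 1) := by
  have h1 := GG_le (t + 1)
  rw [GG_succ] at h1
  unfold bb
  omega

lemma bb_gap (s u : ℕ) : bb s + NN s + NN (s + u + 1) + u ≤ bb (s + u + 1) := by
  have : GG s + NN s + u ≤ GG (s + u + 1) := by
    induction u with
    | zero => rw [add_zero, add_zero, GG_succ]
    | succ u ih =>
      have h1 := GG_succ (s + u + 1)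
      have h2 := NN_pos (s + u + 1)
      have h3 : s + (u + 1) + 1 = s + u + 1 + 1 := by ring
      rw [h3]
      omega
  unfold bb
  omega

lemma bb_ge (t : ℕ) : NN t + t ≤ bb t := by
  have : t ≤ GG t := by
    unfold GG
    calc t = ∑ s ∈ Finset.range t, 1 := by simp
      _ ≤ _ := Finset.sum_le_sum fun s _ => NN_pos s
  unfold bb
  omega

lemma bb_strictMono : StrictMono bb := by
  refine strictMono_nat_of_lt_succ fun n => ?_
  have := bb_gap n 0
  have := NN_pos n
  simp only [add_zero] at *
  omega

lemma vv_val (j q : ℕ) : vv (5 ^ j * (5 * q + 1) - 1) = j := by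
  have : Fact (Nat.Prime 5) := ⟨by norm_num⟩
  unfold vv
  have : 0 < 5 ^ j * (5 * q + 1) := by positivity
  rw [Nat.sub_add_cancel this, padicValNat.mul (by positivity) (by omega),
    padicValNat.prime_pow, padicValNat.eq_zero_of_not_dvd (by omega), add_zero]

noncomputable def rr (n : ℕ) : ℝ := (((n : ℝ)) ^ (3 / 2 : ℝ))⁻¹

lemma rr_nonneg (n : ℕ) : 0 ≤ rr n := by unfold rr; positivity

lemma rr_summable : Summable rr := Real.summable_nat_rpow_inv.2 (by norm_num)

lemma rr_tail : Tendsto (fun n => ∑' k, rr (k + n)) atTop (𝓝 0) := tendsto_sum_nat_add rr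

lemma rr_bound (v n m : ℕ) (hm : 1 ≤ m) (h : 4 ^ v + m ≤ n + 1) :
    (2 : ℝ) ^ v / ((n : ℝ) + 1) ^ 2 ≤ rr m := by
  have hX : (0 : ℝ) < (n : ℝ) + 1 := by positivity
  have h' : (4 : ℝ) ^ v + m ≤ (n : ℝ) + 1 := by exact_mod_cast h
  have hm' : (0 : ℝ) < m := by exact_mod_cast hm
  have h4 : (0 : ℝ) < 4 ^ v := by positivity
  set X : ℝ := (n : ℝ) + 1
  have e1 : X ^ 2 = X ^ (3 / 2 : ℝ) * X ^ (1 / 2 : ℝ) := by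
    rw [← Real.rpow_add hX, ← Real.rpow_natCast]; norm_num
  have e2 : (2 : ℝ) ^ v ≤ X ^ (1 / 2 : ℝ) := by
    rw [← Real.sqrt_eq_rpow]
    apply Real.le_sqrt_of_sq_le
    rw [← pow_mul, mul_comm, pow_mul]; norm_num; linarith
  have e3 : (m : ℝ) ^ (3 / 2 : ℝ) ≤ X ^ (3 / 2 : ℝ) :=
    Real.rpow_le_rpow hm'.le (by linarith) (by norm_num)
  unfold rr
  have p1 : 0 < (m : ℝ) ^ (3 / 2 : ℝ) := by positivity
  have p2 : 0 < X ^ (3 / 2 : ℝ) := by positivity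
  rw [div_le_iff₀ (by positivity), e1, inv_mul_eq_div, le_div_iff₀ p1, mul_comm]
  exact mul_le_mul e3 e2 (by positivity) p2.le

section crit
variable {X : Type*} [NormedAddCommGroup X] [NormedSpace ℂ X]

lemma core [CompleteSpace X] (T : X →L[ℂ] X) (S : ℕ → ℕ → X)
    (h1 : ∀ j n, T (S j (n + 1)) = S j n)
    (h2 : ∀ j, (T ^ (2 ^ j)) (S j 0) = 0)
    (h3 : ∀ j n, ‖S j n‖ ≤ 2 ^ j / ((n : ℝ) + 1) ^ 2)
    (hd : ∀ U : Set X, IsOpen U → U.Nonempty → ∃ y ∈ U, ∀ J, ∃ j ≥ J, S j 0 = y) :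
    (FHC T).Nonempty := by
  have hT : ∀ j m n, (T ^ m) (S j (n + m)) = S j n := by
    intro j m
    induction m with
    | zero => intro n; simp
    | succ m ih =>
      intro n
      rw [pow_succ, mul_apply_eq_comp, ← add_assoc, h1, ih]
  have hT0 : ∀ j m n, n + 2 ^ j ≤ m → (T ^ m) (S j n) = 0 := by
    intro j m n h
    obtain ⟨c, rfl⟩ := Nat.exists_eq_add_of_le h
    have := hT j n 0
    rw [zero_add] at this
    rw [show n + 2 ^ j + c = c + 2 ^ j + n by ring, pow_add, pow_add,
      mul_apply_eq_comp, this, mul_apply_eq_comp, h2, map_zero]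
  set f : ℕ → X := fun t => S (vv t) (bb t) with hf
  have hsum : Summable f := by
    refine Summable.of_norm_bounded ((summable_nat_add_iff 1).2 rr_summable) fun t => ?_
    refine (h3 _ _).trans (rr_bound _ _ _ (by omega) ?_)
    have := bb_ge t
    unfold NN at this
    omega
  have key : ∀ s, ‖(T ^ bb s) (∑' t, f t) - S (vv s) 0‖ ≤ ∑' k, rr (k + (4 ^ vv s + 1)) := by
    intro s
    have hs2 : Summable fun t => (T ^ bb s) (f t) := (T ^ bb s).summable hsum
    rw [(T ^ bb s).map_tsum hsum, ← hs2.sum_add_tsum_nat_add (s + 1), Finset.sum_range_succ,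
      Finset.sum_eq_zero, zero_add]
    · have e : (T ^ bb s) (f s) = S (vv s) 0 := by
        have := hT (vv s) (bb s) 0
        rwa [zero_add] at this
      rw [e, add_sub_cancel_left]
      refine tsum_of_norm_bounded
        ((summable_nat_add_iff (4 ^ vv s + 1)).2 rr_summable).hasSum fun k => ?_
      have hg := bb_gap s k
      have e1 : k + (s + 1) = s + k + 1 := by ring
      rw [e1]
      have e2 : bb (s + k + 1) = (bb (s + k + 1) - bb s) + bb s := by omega
      have e3 : f (s + k + 1) = S (vv (s + k + 1)) ((bb (s + k + 1) - bb s) + bb s) := by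
        rw [← e2]
      rw [e3, hT]
      refine (h3 _ _).trans (rr_bound _ _ _ (by rw [← add_assoc]; exact Nat.le_add_left 1 _) ?_)
      unfold NN at hg
      omega
    · intro t ht
      obtain ⟨k, rfl⟩ := Nat.exists_eq_add_of_lt (Finset.mem_range.1 ht)
      apply hT0
      have hg := bb_gap t k
      have : 2 ^ vv t ≤ NN t := Nat.pow_le_pow_left (by norm_num) _
      omega
  refine ⟨∑' t, f t, fun U hU hne => ?_⟩
  obtain ⟨y, hy, hj⟩ := hd U hU hne
  obtain ⟨ε, hε, hball⟩ := Metric.isOpen_iff.1 hU y hy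
  obtain ⟨J, hJ⟩ := eventually_atTop.1 (rr_tail.eventually (gt_mem_nhds hε))
  obtain ⟨j, hjJ, hjy⟩ := hj J
  refine lowerDensity_pos_of_seq (fun q => bb (5 ^ j * (5 * q + 1) - 1)) ?_ (40 * 5 ^ j)
    (by positivity) ?_ ?_
  · intro a b hab
    have := bb_strictMono.injective hab
    have h5 : 0 < 5 ^ j := by positivity
    have pa : 0 < 5 ^ j * (5 * a + 1) := by positivity
    have pb : 0 < 5 ^ j * (5 * b + 1) := by positivity
    have e : 5 ^ j * (5 * a + 1) = 5 ^ j * (5 * b + 1) := by omega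
    have := Nat.eq_of_mul_eq_mul_left h5 e
    omega
  · intro q
    have := bb_le (5 ^ j * (5 * q + 1) - 1)
    have pa : 0 < 5 ^ j * (5 * q + 1) := by positivity
    rw [Nat.sub_add_cancel pa] at this
    refine this.trans ?_
    have h5 : 0 < 5 ^ j := by positivity
    nlinarith
  · intro q
    apply hball
    rw [Metric.mem_ball, dist_eq_norm]
    have := key (5 ^ j * (5 * q + 1) - 1)
    rw [vv_val, hjy] at this
    refine this.trans_lt (hJ _ ?_)
    have : j < 4 ^ j := Nat.lt_pow_self (by norm_num)
    omega

/-- good vectors for the criterion -/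
def Good (T : X →L[ℂ] X) (y : X) : Prop :=
  ∃ s : ℕ → X, ∃ K : ℕ, s 0 = y ∧ (∀ n, T (s (n + 1)) = s n) ∧ (T ^ K) y = 0 ∧
    ∀ n, ‖s n‖ ≤ K / ((n : ℝ) + 1) ^ 2

lemma pow_zero_mono {T : X →L[ℂ] X} {y : X} {K L : ℕ} (h : K ≤ L) (hy : (T ^ K) y = 0) :
    (T ^ L) y = 0 := by
  obtain ⟨c, rfl⟩ := Nat.exists_eq_add_of_le h
  rw [add_comm, pow_add, mul_apply_eq_comp, hy, map_zero]

lemma Good.zero (T : X →L[ℂ] X) : Good T 0 := ⟨0, 0, by simp⟩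

lemma Good.add {T : X →L[ℂ] X} {y z : X} (hy : Good T y) (hz : Good T z) : Good T (y + z) := by
  obtain ⟨s, K, a1, a2, a3, a4⟩ := hy
  obtain ⟨s', K', b1, b2, b3, b4⟩ := hz
  refine ⟨s + s', K + K', by simp [a1, b1], fun n => by simp [a2, b2], ?_, fun n => ?_⟩
  · rw [map_add, pow_zero_mono (Nat.le_add_right K K') a3,
      pow_zero_mono (Nat.le_add_left K' K) b3, add_zero]
  · refine (norm_add_le _ _).trans ?_
    push_cast
    rw [add_div]
    exact add_le_add (a4 n) (b4 n)

lemma Good.smul {T : X →L[ℂ] X} {y : X} (c : ℂ) (hy : Good T y) : Good T (c • y) := by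
  obtain ⟨s, K, a1, a2, a3, a4⟩ := hy
  obtain ⟨M, hM⟩ := exists_nat_ge ‖c‖
  refine ⟨c • s, (M + 1) * K, by simp [a1], fun n => by simp [a2], ?_, fun n => ?_⟩
  · rw [map_smul, pow_zero_mono (Nat.le_mul_of_pos_left K (by omega)) a3, smul_zero]
  · rw [Pi.smul_apply, norm_smul]
    push_cast
    rw [mul_div_assoc]
    exact mul_le_mul (by linarith) (a4 n) (norm_nonneg _) (by positivity)

lemma fhc_criterion [CompleteSpace X] (T : X →L[ℂ] X) (e : ℕ → X)
    (hdense : Dense (Submodule.span ℂ (Set.range e) : Set X))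
    (he : ∀ k, Good T (e k)) : (FHC T).Nonempty := by
  have hgood : ∀ y ∈ Submodule.span ℂ (Set.range e), Good T y := by
    intro y hy
    induction hy using Submodule.span_induction with
    | mem x h => obtain ⟨k, rfl⟩ := h; exact he k
    | zero => exact Good.zero T
    | add x y _ _ hx hy => exact hx.add hy
    | smul a x _ hx => exact hx.smul a
  have hsep : TopologicalSpace.IsSeparable (Submodule.span ℂ (Set.range e) : Set X) :=
    (Set.countable_range e).isSeparable.span
  obtain ⟨t, hts, htc, hst⟩ := hsep.exists_countable_dense_subset
  have htd : Dense t := fun x => closure_minimal hst isClosed_closure (hdense x)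
  have htne : t.Nonempty := htd.nonempty
  obtain ⟨y, rfl⟩ := htc.exists_eq_range htne
  have hy : ∀ i, Good T (y i) := fun i => hgood _ (hts ⟨i, rfl⟩)
  choose s K a1 a2 a3 a4 using hy
  classical
  refine core T (fun j => if K (Nat.unpair j).1 ≤ 2 ^ j then s (Nat.unpair j).1 else 0)
    ?_ ?_ ?_ ?_
  · intro j n
    split_ifs
    · exact a2 _ _
    · simp
  · intro j
    split_ifs with h
    · rw [a1]; exact pow_zero_mono h (a3 _)
    · simp
  · intro j n
    split_ifs with h
    · refine (a4 _ _).trans ?_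
      gcongr
      exact_mod_cast h
    · simp only [Pi.zero_apply, norm_zero]; positivity
  · intro U hU hne
    obtain ⟨_, hyU, i, rfl⟩ := htd.inter_open_nonempty U hU hne
    refine ⟨y i, hyU, fun J => ⟨Nat.pair i (J + K i), ?_, ?_⟩⟩
    · have := Nat.right_le_pair i (J + K i)
      omega
    · have h := Nat.right_le_pair i (J + K i)
      have h' : Nat.pair i (J + K i) < 2 ^ (Nat.pair i (J + K i)) := Nat.lt_pow_self (by norm_num)
      simp only [Nat.unpair_pair]
      rw [if_pos (by omega), a1]

end crit

lemma cnt_le_of {E : Set ℕ} {M n : ℕ} (h : ∀ m ∈ E, m ≤ M → m < n) : cnt E M ≤ n := by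
  classical
  have hc : cnt E M = (((Finset.range (M + 1)).filter (· ∈ E)).card : ℝ) := by
    unfold cnt
    simp [Set.indicator_apply]
  rw [hc]
  have hsub : (Finset.range (M + 1)).filter (· ∈ E) ⊆ Finset.range n := by
    intro m hm
    simp only [Finset.mem_filter, Finset.mem_range] at hm ⊢
    exact h m hm.2 (by omega)
  have := Finset.card_le_card hsub
  rw [Finset.card_range] at this
  exact_mod_cast this

lemma exists_ge_of_pos {F : Set ℕ} (h : 0 < lowerDensity F) (n : ℕ) : ∃ m ∈ F, n ≤ m := by
  obtain ⟨c, hc, hev⟩ := lowerDensity_pos_imp h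
  by_contra! hcon
  obtain ⟨M0, hM0⟩ := eventually_atTop.1 hev
  obtain ⟨C, hC⟩ := exists_nat_gt ((n : ℝ) / c)
  rw [div_lt_iff₀ hc] at hC
  have h1 := hM0 (max M0 C) (le_max_left _ _)
  have h2 : cnt F (max M0 C) ≤ n := cnt_le_of fun m hm _ => hcon m hm
  have h3 : (C : ℝ) ≤ (max M0 C : ℕ) := by exact_mod_cast le_max_right M0 C
  nlinarith

lemma growth (l : ℝ) (hl : 1 < l) (C : ℕ) :
    ∀ᶠ n : ℕ in atTop, 2 * ((C : ℝ) * n + 1) ^ 2 < l ^ n := by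
  have h := tendsto_pow_const_div_const_pow_of_one_lt 2 hl
  have hpos : (0 : ℝ) < 1 / (2 * ((C : ℝ) + 1) ^ 2) := by positivity
  filter_upwards [h.eventually (gt_mem_nhds hpos), eventually_ge_atTop 1] with n hn h1
  have hln : 0 < l ^ n := by positivity
  have h1' : (1 : ℝ) ≤ n := by exact_mod_cast h1
  rw [div_lt_div_iff₀ hln (by positivity), one_mul] at hn
  refine lt_of_le_of_lt ?_ hn
  have hle : (C : ℝ) * n + 1 ≤ ((C : ℝ) + 1) * n := by nlinarith
  have : ((C : ℝ) * n + 1) ^ 2 ≤ (((C : ℝ) + 1) * n) ^ 2 := by gcongr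
  nlinarith

section shift
variable {p : ℝ≥0∞} [Fact (1 ≤ p)]

noncomputable def ee (p : ℝ≥0∞) (k : ℕ) : lp (fun _ : ℕ => ℂ) p := lp.single p k (1 : ℂ)

lemma B_succ {w : ℕ → ℂ}
    {B : lp (fun _ : ℕ => ℂ) p →L[ℂ] lp (fun _ : ℕ => ℂ) p}
    (hB : ∀ x : lp (fun _ : ℕ => ℂ) p, ∀ n : ℕ, (B x) n = w (n + 1) * x (n + 1))
    (m : ℕ) : B (ee p (m + 1)) = w (m + 1) • ee p m := by
  apply lp.ext
  funext n
  rw [hB, lp.coeFn_smul, Pi.smul_apply, smul_eq_mul]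
  unfold ee
  rw [lp.single_apply, lp.single_apply]
  by_cases h : n = m
  · subst h; simp
  · rw [Pi.single_eq_of_ne (by omega), Pi.single_eq_of_ne h]; simp

lemma B_zero {w : ℕ → ℂ}
    {B : lp (fun _ : ℕ => ℂ) p →L[ℂ] lp (fun _ : ℕ => ℂ) p}
    (hB : ∀ x : lp (fun _ : ℕ => ℂ) p, ∀ n : ℕ, (B x) n = w (n + 1) * x (n + 1))
    : B (ee p 0) = 0 := by
  apply lp.ext
  funext n
  rw [hB]
  unfold ee
  rw [lp.single_apply, Pi.single_eq_of_ne (by omega)]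
  simp

lemma pow_ee {w : ℕ → ℂ}
    {B : lp (fun _ : ℕ => ℂ) p →L[ℂ] lp (fun _ : ℕ => ℂ) p}
    (hB : ∀ x : lp (fun _ : ℕ => ℂ) p, ∀ n : ℕ, (B x) n = w (n + 1) * x (n + 1))
    (μ : ℂ) (k : ℕ) : ((μ • B) ^ (k + 1)) (ee p k) = 0 := by
  induction k with
  | zero => simp [B_zero hB]
  | succ k ih =>
    rw [pow_succ, mul_apply_eq_comp, _root_.smul_apply, B_succ hB, map_smul,
      map_smul, ih, smul_zero, smul_zero]

lemma good_ee {w : ℕ → ℂ}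
    (hw : ∀ n : ℕ, 1 ≤ n → w n = (((n : ℂ) + 1) / (n : ℂ)) ^ 2)
    {B : lp (fun _ : ℕ => ℂ) p →L[ℂ] lp (fun _ : ℕ => ℂ) p}
    (hB : ∀ x : lp (fun _ : ℕ => ℂ) p, ∀ n : ℕ, (B x) n = w (n + 1) * x (n + 1))
    (l : ℝ) (hl : 1 ≤ l) (k : ℕ) : Good ((l : ℂ) • B) (ee p k) := by
  have hl0 : (l : ℂ) ≠ 0 := by exact_mod_cast (by linarith : l ≠ 0)
  refine ⟨fun n => ((((k : ℂ) + 1) / ((k : ℂ) + n + 1)) ^ 2 * ((l : ℂ)⁻¹) ^ n) • ee p (k + n),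
    (k + 1) ^ 2, ?_, ?_, ?_, ?_⟩
  · have : (k : ℂ) + 1 ≠ 0 := by exact_mod_cast Nat.succ_ne_zero k
    simp [this]
  · intro n
    have h1 : (k : ℂ) + n + 1 ≠ 0 := by exact_mod_cast Nat.succ_ne_zero (k + n)
    have h2 : (k : ℂ) + n + 1 + 1 ≠ 0 := by exact_mod_cast Nat.succ_ne_zero (k + n + 1)
    have h2' : (k : ℂ) + (n + 1) + 1 ≠ 0 := by rwa [← add_assoc]
    dsimp only
    rw [map_smul, _root_.smul_apply, ← add_assoc, B_succ hB, hw _ (by omega),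
      smul_smul, smul_smul]
    congr 1
    push_cast
    rw [pow_succ ((l : ℂ)⁻¹)]
    generalize ((l : ℂ)⁻¹) ^ n = z
    field_simp
    ring
  · exact pow_zero_mono (by nlinarith) (pow_ee hB _ k)
  · intro n
    dsimp only
    have hp0 : 0 < p := zero_lt_one.trans_le Fact.out
    have hnorm : ‖ee p (k + n)‖ = 1 := by
      unfold ee; rw [lp.norm_single hp0]; simp
    rw [norm_smul, hnorm, mul_one, norm_mul, norm_pow, norm_pow, norm_div, norm_inv]
    have e1 : ‖(k : ℂ) + 1‖ = (k : ℝ) + 1 := by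
      have := Complex.norm_natCast (k + 1)
      push_cast at this; exact this
    have e2 : ‖(k : ℂ) + n + 1‖ = (k : ℝ) + n + 1 := by
      have := Complex.norm_natCast (k + n + 1)
      push_cast at this; exact this
    have e3 : ‖(l : ℂ)‖ = l := by
      rw [Complex.norm_real, Real.norm_of_nonneg (by linarith)]
    rw [e1, e2, e3]
    have h1 : (l⁻¹) ^ n ≤ 1 := pow_le_one₀ (by positivity) (inv_le_one_of_one_le₀ hl)
    have h2 : (((k : ℝ) + 1) / (k + n + 1)) ^ 2 ≤ (((k : ℝ) + 1) / (n + 1)) ^ 2 := by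
      gcongr
      linarith [(Nat.cast_nonneg k : (0 : ℝ) ≤ k)]
    calc _ ≤ (((k : ℝ) + 1) / (n + 1)) ^ 2 * 1 :=
          mul_le_mul h2 h1 (by positivity) (by positivity)
      _ = _ := by rw [div_pow]; push_cast; ring

lemma dense_ee (hp : p ≠ ⊤) :
    Dense (Submodule.span ℂ (Set.range (ee p)) : Set (lp (fun _ : ℕ => ℂ) p)) := by
  intro x
  refine mem_closure_of_tendsto (lp.hasSum_single hp x) (Eventually.of_forall fun s => ?_)
  refine Submodule.sum_mem _ fun i _ => ?_
  have : lp.single p i (x i) = (x i) • ee p i := by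
    unfold ee
    rw [← lp.single_smul, smul_eq_mul, mul_one]
  rw [this]
  exact Submodule.smul_mem _ _ (Submodule.subset_span ⟨i, rfl⟩)

lemma fhc_ne {w : ℕ → ℂ}
    (hw : ∀ n : ℕ, 1 ≤ n → w n = (((n : ℂ) + 1) / (n : ℂ)) ^ 2)
    {B : lp (fun _ : ℕ => ℂ) p →L[ℂ] lp (fun _ : ℕ => ℂ) p}
    (hB : ∀ x : lp (fun _ : ℕ => ℂ) p, ∀ n : ℕ, (B x) n = w (n + 1) * x (n + 1))
    (hp : p ≠ ⊤) (l : ℝ) (hl : 1 ≤ l) : (FHC ((l : ℂ) • B)).Nonempty :=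
  fhc_criterion _ (ee p) (dense_ee hp) (good_ee hw hB l hl)

lemma pow_coord {w : ℕ → ℂ}
    (hw : ∀ n : ℕ, 1 ≤ n → w n = (((n : ℂ) + 1) / (n : ℂ)) ^ 2)
    {B : lp (fun _ : ℕ => ℂ) p →L[ℂ] lp (fun _ : ℕ => ℂ) p}
    (hB : ∀ x : lp (fun _ : ℕ => ℂ) p, ∀ n : ℕ, (B x) n = w (n + 1) * x (n + 1))
    (n : ℕ) (x : lp (fun _ : ℕ => ℂ) p) (k : ℕ) :
    ((B ^ n) x) k * ((k : ℂ) + 1) ^ 2 = ((n : ℂ) + k + 1) ^ 2 * x (n + k) := by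
  induction n generalizing x with
  | zero => simp [mul_comm]
  | succ n ih =>
    have h1 : (n : ℂ) + k + 1 ≠ 0 := by exact_mod_cast Nat.succ_ne_zero (n + k)
    rw [pow_succ, mul_apply_eq_comp, ih, hB, hw _ (by omega),
      show n + 1 + k = n + k + 1 by ring]
    push_cast
    field_simp
    ring

lemma fhc_disj {w : ℕ → ℂ}
    (hw : ∀ n : ℕ, 1 ≤ n → w n = (((n : ℂ) + 1) / (n : ℂ)) ^ 2)
    {B : lp (fun _ : ℕ => ℂ) p →L[ℂ] lp (fun _ : ℕ => ℂ) p}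
    (hB : ∀ x : lp (fun _ : ℕ => ℂ) p, ∀ n : ℕ, (B x) n = w (n + 1) * x (n + 1))
    (l : ℝ) (hl : 1 < l) : FHC B ∩ FHC ((l : ℂ) • B) = ∅ := by
  rw [Set.eq_empty_iff_forall_notMem]
  rintro x ⟨hx1, hx2⟩
  have hp0 : p ≠ 0 := (zero_lt_one.trans_le (Fact.out : 1 ≤ p)).ne'
  have hE := hx1 (Metric.ball (ee p 0) (1 / 2)) Metric.isOpen_ball
    (Metric.nonempty_ball.2 (by norm_num))
  have hF := hx2 (Metric.ball 0 1) Metric.isOpen_ball (Metric.nonempty_ball.2 (by norm_num))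
  obtain ⟨c, hc, hev⟩ := lowerDensity_pos_imp hE
  obtain ⟨M0, hM0⟩ := eventually_atTop.1 hev
  obtain ⟨C, hC⟩ := exists_nat_ge (1 / c)
  have hC1 : 1 ≤ c * C := by rwa [div_le_iff₀' hc] at hC
  have hCpos : 1 ≤ C := by
    rcases Nat.eq_zero_or_pos C with rfl | h
    · norm_num at hC1
    · exact h
  obtain ⟨n0, hn0⟩ := eventually_atTop.1 (growth l hl C)
  obtain ⟨n, hnF, hn⟩ := exists_ge_of_pos hF (max M0 n0)
  have hg := hn0 n ((le_max_right _ _).trans hn)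
  have hnM : M0 ≤ C * n := ((le_max_left _ _).trans hn).trans (Nat.le_mul_of_pos_left n hCpos)
  have hcn := hM0 _ hnM
  have hln : 0 < l ^ n := by positivity
  have hBn : l ^ n * ‖(B ^ n) x‖ < 1 := by
    have := hnF
    rw [Set.mem_ofPred_eq, mem_ball_zero_iff, smul_pow, _root_.smul_apply, norm_smul,
      norm_pow, Complex.norm_real, Real.norm_of_nonneg (by linarith)] at this
    exact this
  have hle : cnt {n : ℕ | (B ^ n) x ∈ Metric.ball (ee p 0) (1 / 2)} (C * n) ≤ n := by
    refine cnt_le_of fun m hm hmM => ?_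
    by_contra! hnm
    obtain ⟨k, rfl⟩ := Nat.exists_eq_add_of_le hnm
    rw [Set.mem_ofPred_eq, mem_ball_iff_norm] at hm
    have hm0 := (lp.norm_apply_le_norm hp0 ((B ^ (n + k)) x - ee p 0) 0).trans_lt hm
    rw [lp.coeFn_sub, Pi.sub_apply] at hm0
    have he0 : (ee p 0 : lp (fun _ : ℕ => ℂ) p) 0 = 1 := lp.single_apply_self p 0 1
    rw [he0] at hm0
    have c0 := pow_coord hw hB (n + k) x 0
    have ck := pow_coord hw hB n x k
    have ceq : ((B ^ (n + k)) x) 0 = ((B ^ n) x) k * ((k : ℂ) + 1) ^ 2 := by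
      rw [ck]
      simpa using c0
    have hlow : 1 / 2 ≤ ‖((B ^ (n + k)) x) 0‖ := by
      have := norm_sub_norm_le (1 : ℂ) (1 - ((B ^ (n + k)) x) 0)
      rw [sub_sub_cancel, norm_one, norm_sub_rev] at this
      linarith
    have hk1 : ‖(k : ℂ) + 1‖ = (k : ℝ) + 1 := by
      have := Complex.norm_natCast (k + 1)
      push_cast at this; exact this
    rw [ceq, norm_mul, norm_pow, hk1] at hlow
    have hcoord := lp.norm_apply_le_norm hp0 ((B ^ n) x) k
    have hkM : (k : ℝ) ≤ C * n := by
      have : k ≤ C * n := by omega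
      exact_mod_cast this
    have hk2 : ((k : ℝ) + 1) ^ 2 ≤ ((C : ℝ) * n + 1) ^ 2 := by gcongr
    have a1 : (1 : ℝ) / 2 ≤ ‖(B ^ n) x‖ * ((C : ℝ) * n + 1) ^ 2 :=
      hlow.trans (mul_le_mul hcoord hk2 (by positivity) (norm_nonneg _))
    have a2 : l ^ n * (1 / 2) ≤ (l ^ n * ‖(B ^ n) x‖) * ((C : ℝ) * n + 1) ^ 2 := by
      rw [mul_assoc]; exact mul_le_mul_of_nonneg_left a1 hln.le
    have a3 : (l ^ n * ‖(B ^ n) x‖) * ((C : ℝ) * n + 1) ^ 2 ≤ 1 * ((C : ℝ) * n + 1) ^ 2 :=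
      mul_le_mul_of_nonneg_right hBn.le (by positivity)
    linarith
  have := hcn.trans hle
  push_cast at this
  have hn0' : (0 : ℝ) ≤ n := Nat.cast_nonneg n
  nlinarith

end shift

/-- Corollary 2.27: for the weight `w_n = ((n+1)/n)²`, the weighted backward shift
`B_w` on `ℓ^p(ℕ)` (encoded as a bounded operator `B` with
`(B x) n = w (n+1) * x (n+1)`) is frequently hypercyclic, each multiple `λB_w`
with `λ > 1` is frequently hypercyclic, but `FHC(B_w) ∩ FHC(λB_w) = ∅`. In particular
there exist two frequently hypercyclic weighted shifts on `ℓ^p(ℕ)` with no common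
frequently hypercyclic vector. -/
theorem stmt13 (p : ℝ≥0∞) [Fact (1 ≤ p)] (hp : p ≠ ⊤)
    (w : ℕ → ℂ) (hw : ∀ n : ℕ, 1 ≤ n → w n = (((n : ℂ) + 1) / (n : ℂ)) ^ 2)
    (B : lp (fun _ : ℕ => ℂ) p →L[ℂ] lp (fun _ : ℕ => ℂ) p)
    (hB : ∀ x : lp (fun _ : ℕ => ℂ) p, ∀ n : ℕ, (B x) n = w (n + 1) * x (n + 1)) :
    (FHC B).Nonempty ∧
      ∀ l : ℝ, 1 < l →
        (FHC ((l : ℂ) • B)).Nonempty ∧ FHC B ∩ FHC ((l : ℂ) • B) = ∅ := by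

  refine ⟨?_, fun l hl => ⟨fhc_ne hw hB hp l hl.le, fhc_disj hw hB l hl⟩⟩
  have := fhc_ne hw hB hp 1 le_rfl
  simpa using this
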